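/- arXiv:2303.14987 — 2 statements merged into one kernel-verified Lean document; each statement's English description precedes it below -/
import Mathlib

section
/- Let G^i be a spray with coefficients N^i_j and let F be a Finsler structure on U with metric tensor g_{ij} = ½ ∂²(F²)/∂y^i∂y^j. Then S is the geodesic spray of F, i.e. S(∂F²/∂y^i) − ∂F²/∂x^i = 0 on Ω for all i, if and only if the metric tensor is covariant constant with respect to the dynamical covariant derivative: ∇g_{ij} = S(g_{ij}) − Σ_k (N^k_i g_{kj} + N^k_j g_{ik}) = 0 on Ω for all i, j. -/
noncomputable section

/-- A point `(x, y)` of the tangent space coordinates over `ℝⁿ`. -/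
abbrev Pt (n : ℕ) : Type := (Fin n → ℝ) × (Fin n → ℝ)

/-- `Ω = U × (ℝⁿ \ {0})`. -/
def OmegaSet {n : ℕ} (U : Set (Fin n → ℝ)) : Set (Pt n) :=
  {p : Pt n | p.1 ∈ U ∧ p.2 ≠ 0}

/-- Partial derivative `∂f/∂x^i`. -/
def pdx {n : ℕ} (f : Pt n → ℝ) (i : Fin n) (p : Pt n) : ℝ :=
  fderiv ℝ f p (Pi.single i 1, 0)

/-- Partial derivative `∂f/∂y^i`. -/
def pdy {n : ℕ} (f : Pt n → ℝ) (i : Fin n) (p : Pt n) : ℝ :=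
  fderiv ℝ f p (0, Pi.single i 1)

/-- Second fibre derivative `∂²f/∂y^i∂y^j`. -/
def pdyy {n : ℕ} (f : Pt n → ℝ) (i j : Fin n) : Pt n → ℝ :=
  pdy (pdy f j) i

/-- The spray vector field applied to a function:
`S(f) = Σ_k (y^k ∂f/∂x^k − 2 G^k ∂f/∂y^k)`. -/
def Sop {n : ℕ} (G : Fin n → Pt n → ℝ) (f : Pt n → ℝ) (p : Pt n) : ℝ :=
  ∑ k, (p.2 k * pdx f k p - 2 * G k p * pdy f k p)

/-- Connection coefficients `N^i_j = ∂G^i/∂y^j`. -/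
def Ncoef {n : ℕ} (G : Fin n → Pt n → ℝ) (i j : Fin n) : Pt n → ℝ :=
  pdy (G i) j

/-- Horizontal derivative `δf/δx^i = ∂f/∂x^i − Σ_j N^j_i ∂f/∂y^j`. -/
def deltax {n : ℕ} (G : Fin n → Pt n → ℝ) (f : Pt n → ℝ) (i : Fin n) (p : Pt n) : ℝ :=
  pdx f i p - ∑ j, Ncoef G j i p * pdy f j p

/-- Dynamical covariant derivative of a `(0,2)` family:
`∇T_{ij} = S(T_{ij}) − Σ_k (N^k_i T_{kj} + N^k_j T_{ik})`. -/
def nablaT {n : ℕ} (G : Fin n → Pt n → ℝ) (T : Fin n → Fin n → Pt n → ℝ)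
    (i j : Fin n) (p : Pt n) : ℝ :=
  Sop G (T i j) p - ∑ k, (Ncoef G k i p * T k j p + Ncoef G k j p * T i k p)

/-- `f` is positively `k`-homogeneous in the fibre variable `y`, on `Ω`. -/
def PosHomog {n : ℕ} (U : Set (Fin n → ℝ)) (k : ℤ) (f : Pt n → ℝ) : Prop :=
  ∀ L : ℝ, 0 < L → ∀ p ∈ OmegaSet U, f (p.1, L • p.2) = L ^ k * f p

/-- A spray: smooth, positively 2-homogeneous coefficients `G^i`. -/
def IsSpray {n : ℕ} (U : Set (Fin n → ℝ)) (G : Fin n → Pt n → ℝ) : Prop :=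
  ∀ i, ContDiffOn ℝ (⊤ : ℕ∞) (G i) (OmegaSet U) ∧ PosHomog U 2 (G i)

/-- Components of the Euler-Lagrange 1-form: `(δ_S f)_i = S(∂f/∂y^i) − ∂f/∂x^i`. -/
def EL {n : ℕ} (G : Fin n → Pt n → ℝ) (f : Pt n → ℝ) (i : Fin n) (p : Pt n) : ℝ :=
  Sop G (pdy f i) p - pdx f i p

/-- The metric tensor `g_{ij} = ½ ∂²(F²)/∂y^i∂y^j` of a Finsler function. -/
def metricTensor {n : ℕ} (F : Pt n → ℝ) (i j : Fin n) (p : Pt n) : ℝ :=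
  (1 / 2) * pdyy (fun q => F q ^ 2) i j p

/-- A Finsler structure on `U`: smooth, positive, positively 1-homogeneous,
with invertible metric tensor at every point of `Ω`. -/
def IsFinsler {n : ℕ} (U : Set (Fin n → ℝ)) (F : Pt n → ℝ) : Prop :=
  ContDiffOn ℝ (⊤ : ℕ∞) F (OmegaSet U) ∧ (∀ p ∈ OmegaSet U, 0 < F p) ∧ PosHomog U 1 F ∧
    ∀ p ∈ OmegaSet U, IsUnit (Matrix.of (fun i j => metricTensor F i j p))

theorem hOpen {n : ℕ} {U : Set (Fin n → ℝ)} (hU : IsOpen U) : IsOpen (OmegaSet U) := by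
  have : OmegaSet U = (Prod.fst ⁻¹' U) ∩ (Prod.snd ⁻¹' {0}ᶜ) := by
    ext p; simp [OmegaSet]
  rw [this]
  exact (hU.preimage continuous_fst).inter (isOpen_compl_singleton.preimage continuous_snd)

theorem hsmD {n : ℕ} {O : Set (Pt n)} (hO : IsOpen O) {f : Pt n → ℝ}
    (hf : ContDiffOn ℝ (⊤ : ℕ∞) f O) (v : Pt n) :
    ContDiffOn ℝ (⊤ : ℕ∞) (fun p => fderiv ℝ f p v) O :=
  (hf.fderiv_of_isOpen hO (by simp)).clm_apply contDiffOn_const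

theorem hsmx {n : ℕ} {O : Set (Pt n)} (hO : IsOpen O) {f : Pt n → ℝ}
    (hf : ContDiffOn ℝ (⊤ : ℕ∞) f O) (i : Fin n) : ContDiffOn ℝ (⊤ : ℕ∞) (pdx f i) O :=
  hsmD hO hf _

theorem hsmy {n : ℕ} {O : Set (Pt n)} (hO : IsOpen O) {f : Pt n → ℝ}
    (hf : ContDiffOn ℝ (⊤ : ℕ∞) f O) (i : Fin n) : ContDiffOn ℝ (⊤ : ℕ∞) (pdy f i) O :=
  hsmD hO hf _

theorem hdiff {n : ℕ} {O : Set (Pt n)} (hO : IsOpen O) {f : Pt n → ℝ}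
    (hf : ContDiffOn ℝ (⊤ : ℕ∞) f O) {p : Pt n} (hp : p ∈ O) : DifferentiableAt ℝ f p :=
  (hf.contDiffAt (hO.mem_nhds hp)).differentiableAt (by simp)

theorem hcommD {n : ℕ} {O : Set (Pt n)} (hO : IsOpen O) {f : Pt n → ℝ}
    (hf : ContDiffOn ℝ (⊤ : ℕ∞) f O) {p : Pt n} (hp : p ∈ O) (v w : Pt n) :
    fderiv ℝ (fun q => fderiv ℝ f q v) p w = fderiv ℝ (fun q => fderiv ℝ f q w) p v := by
  have h1 : ContDiffAt ℝ (⊤ : ℕ∞) f p := hf.contDiffAt (hO.mem_nhds hp)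
  have hd : DifferentiableAt ℝ (fderiv ℝ f) p :=
    ((hf.fderiv_of_isOpen hO (m := (⊤ : ℕ∞)) (by simp)).contDiffAt
      (hO.mem_nhds hp)).differentiableAt (by simp)
  have hs : IsSymmSndFDerivAt ℝ f p := h1.isSymmSndFDerivAt (by
    simp only [minSmoothness_of_isRCLikeNormedField]
    exact WithTop.coe_le_coe.2 (le_top : (2 : ℕ∞) ≤ ⊤))
  rw [fderiv_clm_apply hd (differentiableAt_const _), fderiv_clm_apply hd (differentiableAt_const _)]
  simpa using hs w v

theorem hcoord {n : ℕ} (k : Fin n) (p : Pt n) (v : Pt n) :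
    fderiv ℝ (fun q : Pt n => q.2 k) p v = v.2 k := by
  have : HasFDerivAt (fun q : Pt n => q.2 k)
      ((ContinuousLinearMap.proj (R := ℝ) (φ := fun _ : Fin n => ℝ) k).comp
        (ContinuousLinearMap.snd ℝ (Fin n → ℝ) (Fin n → ℝ))) p :=
    ContinuousLinearMap.hasFDerivAt ((ContinuousLinearMap.proj (R := ℝ) (φ := fun _ : Fin n => ℝ) k).comp
        (ContinuousLinearMap.snd ℝ (Fin n → ℝ) (Fin n → ℝ)))
  rw [this.fderiv]; rfl

theorem hcoordsm {n : ℕ} (k : Fin n) : ContDiff ℝ (⊤ : ℕ∞) (fun q : Pt n => q.2 k) := by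
  fun_prop

theorem hsmS {n : ℕ} {O : Set (Pt n)} (hO : IsOpen O) {G : Fin n → Pt n → ℝ}
    (hG : ∀ i, ContDiffOn ℝ (⊤ : ℕ∞) (G i) O) {f : Pt n → ℝ}
    (hf : ContDiffOn ℝ (⊤ : ℕ∞) f O) : ContDiffOn ℝ (⊤ : ℕ∞) (Sop G f) O := by
  unfold Sop
  refine ContDiffOn.sum fun k _ => ?_
  exact ((hcoordsm k).contDiffOn.mul (hsmx hO hf k)).sub
    ((contDiffOn_const.mul (hG k)).mul (hsmy hO hf k))

theorem hmul {n : ℕ} {a b : Pt n → ℝ} {p : Pt n} (ha : DifferentiableAt ℝ a p)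
    (hb : DifferentiableAt ℝ b p) (v : Pt n) :
    fderiv ℝ (fun q => a q * b q) p v = a p * fderiv ℝ b p v + fderiv ℝ a p v * b p := by
  rw [fderiv_fun_mul ha hb]; simp; ring

theorem hpdyS {n : ℕ} {O : Set (Pt n)} (hO : IsOpen O) {G : Fin n → Pt n → ℝ}
    (hG : ∀ i, ContDiffOn ℝ (⊤ : ℕ∞) (G i) O) {f : Pt n → ℝ}
    (hf : ContDiffOn ℝ (⊤ : ℕ∞) f O) (j : Fin n) {p : Pt n} (hp : p ∈ O) :
    pdy (Sop G f) j p = pdx f j p + Sop G (pdy f j) p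
      - 2 * ∑ k, Ncoef G k j p * pdy f k p := by
  have hx := fun k => hdiff hO (hsmx hO hf k) hp
  have hy := fun k => hdiff hO (hsmy hO hf k) hp
  have hg := fun k => hdiff hO (hG k) hp
  have hc : ∀ k : Fin n, DifferentiableAt ℝ (fun q : Pt n => q.2 k) p :=
    fun k => (hcoordsm k).differentiable (by simp) p
  have h2g : ∀ k, DifferentiableAt ℝ (fun q => 2 * G k q) p := fun k => (hg k).const_mul 2
  have key : pdy (Sop G f) j p = ∑ k, (p.2 k * pdy (pdx f k) j p
      + (Pi.single j 1 : Fin n → ℝ) k * pdx f k p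
      - (2 * G k p * pdy (pdy f k) j p + 2 * Ncoef G k j p * pdy f k p)) := by
    unfold Sop
    rw [pdy, fderiv_fun_sum (fun k _ => ((hc k).fun_mul (hx k)).fun_sub ((h2g k).fun_mul (hy k)))]
    rw [ContinuousLinearMap.sum_apply]
    refine Finset.sum_congr rfl fun k _ => ?_
    rw [fderiv_fun_sub ((hc k).fun_mul (hx k)) ((h2g k).fun_mul (hy k)), ContinuousLinearMap.sub_apply]
    rw [hmul (hc k) (hx k), hmul (h2g k) (hy k), hcoord, fderiv_const_mul (hg k)]
    simp [pdy, Ncoef]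
  have e1 : ∀ k, pdy (pdx f k) j p = pdx (pdy f j) k p := fun k => hcommD hO hf hp _ _
  have e2 : ∀ k, pdy (pdy f k) j p = pdy (pdy f j) k p := fun k => hcommD hO hf hp _ _
  have e3 : ∑ k, (Pi.single j 1 : Fin n → ℝ) k * pdx f k p = pdx f j p := by
    simp [Pi.single_apply]
  rw [key, ← e3, Sop, Finset.mul_sum, ← Finset.sum_add_distrib, ← Finset.sum_sub_distrib]
  refine Finset.sum_congr rfl fun k _ => ?_
  rw [e1, e2]; ring

theorem hpdyEL {n : ℕ} {O : Set (Pt n)} (hO : IsOpen O) {G : Fin n → Pt n → ℝ}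
    (hG : ∀ i, ContDiffOn ℝ (⊤ : ℕ∞) (G i) O) {f : Pt n → ℝ}
    (hf : ContDiffOn ℝ (⊤ : ℕ∞) f O) (i j : Fin n) {p : Pt n} (hp : p ∈ O) :
    pdy (EL G f i) j p = pdx (pdy f i) j p - pdx (pdy f j) i p + Sop G (pdy (pdy f i) j) p
      - 2 * ∑ k, Ncoef G k j p * pdy (pdy f i) k p := by
  have h1 : pdy (EL G f i) j p = pdy (Sop G (pdy f i)) j p - pdy (pdx f i) j p := by
    unfold EL
    rw [pdy, fderiv_fun_sub (hdiff hO (hsmS hO hG (hsmy hO hf i)) hp)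
      (hdiff hO (hsmx hO hf i) hp)]
    rfl
  have e1 : pdy (pdx f i) j p = pdx (pdy f j) i p := hcommD hO hf hp _ _
  rw [h1, hpdyS hO hG (hsmy hO hf i) j hp, e1]; ring

theorem hsym {n : ℕ} {O : Set (Pt n)} (hO : IsOpen O) {G : Fin n → Pt n → ℝ}
    (hG : ∀ i, ContDiffOn ℝ (⊤ : ℕ∞) (G i) O) {F : Pt n → ℝ}
    (hF : ContDiffOn ℝ (⊤ : ℕ∞) (fun q => F q ^ 2) O) (i j : Fin n) {p : Pt n} (hp : p ∈ O) :
    pdy (EL G (fun q => F q ^ 2) i) j p + pdy (EL G (fun q => F q ^ 2) j) i p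
      = 4 * nablaT G (metricTensor F) i j p := by
  set f : Pt n → ℝ := fun q => F q ^ 2 with hf
  have hc : ∀ i j : Fin n, ∀ q ∈ O, pdy (pdy f i) j q = pdy (pdy f j) i q :=
    fun i j q hq => hcommD hO hF hq _ _
  have hS : Sop G (pdy (pdy f i) j) p = Sop G (pdy (pdy f j) i) p := by
    have : fderiv ℝ (pdy (pdy f i) j) p = fderiv ℝ (pdy (pdy f j) i) p :=
      Filter.EventuallyEq.fderiv_eq
        (Filter.eventually_of_mem (hO.mem_nhds hp) (hc i j))
    simp only [Sop, pdx, pdy] at this ⊢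
    rw [this]
  have hSm : Sop G (metricTensor F i j) p = (1 / 2) * Sop G (pdy (pdy f j) i) p := by
    have : fderiv ℝ (metricTensor F i j) p = (1 / 2 : ℝ) • fderiv ℝ (pdy (pdy f j) i) p :=
      fderiv_const_mul (hdiff hO (hsmy hO (hsmy hO hF j) i) hp) _
    simp only [Sop, pdx, pdy, Finset.mul_sum] at this ⊢
    rw [this]
    refine Finset.sum_congr rfl fun k _ => ?_
    simp; ring
  rw [hpdyEL hO hG hF i j hp, hpdyEL hO hG hF j i hp, hS, nablaT, hSm]
  have : ∑ k, (Ncoef G k i p * metricTensor F k j p + Ncoef G k j p * metricTensor F i k p)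
     = (1/2) * (∑ k, Ncoef G k i p * pdy (pdy f j) k p + ∑ k, Ncoef G k j p * pdy (pdy f i) k p) := by
    rw [← Finset.sum_add_distrib, Finset.mul_sum]
    refine Finset.sum_congr rfl fun k _ => ?_
    simp only [metricTensor, pdyy]
    rw [← hf, hc k i p hp]; ring
  rw [this]; ring

/-- scaling map -/
def scal (n : ℕ) (L : ℝ) : Pt n →L[ℝ] Pt n :=
  (ContinuousLinearMap.fst ℝ _ _).prod (L • ContinuousLinearMap.snd ℝ _ _)

theorem hscal {n : ℕ} {U : Set (Fin n → ℝ)} {L : ℝ} (hL : 0 < L) {p : Pt n}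
    (hp : p ∈ OmegaSet U) : (p.1, L • p.2) ∈ OmegaSet U :=
  ⟨hp.1, smul_ne_zero hL.ne' hp.2⟩

theorem hfd {n : ℕ} {U : Set (Fin n → ℝ)} (hU : IsOpen U) {f : Pt n → ℝ}
    (hf : ContDiffOn ℝ (⊤ : ℕ∞) f (OmegaSet U)) {k : ℤ} (hk : PosHomog U k f)
    {L : ℝ} (hL : 0 < L) {p : Pt n} (hp : p ∈ OmegaSet U) (v : Pt n) :
    fderiv ℝ f (p.1, L • p.2) (v.1, L • v.2) = L ^ k * fderiv ℝ f p v := by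
  have hO := hOpen hU
  have h1 : fderiv ℝ (fun q => f (scal n L q)) p = fderiv ℝ (fun q => L ^ k * f q) p :=
    Filter.EventuallyEq.fderiv_eq
      (Filter.eventually_of_mem (hO.mem_nhds hp) (fun q hq => hk L hL q hq))
  have h2 : HasFDerivAt (fun q => f (scal n L q))
      ((fderiv ℝ f (scal n L p)).comp (scal n L)) p :=
    HasFDerivAt.comp p (hdiff hO hf (hscal hL hp)).hasFDerivAt (scal n L).hasFDerivAt
  rw [h2.fderiv, fderiv_const_mul (hdiff hO hf hp)] at h1
  exact congrArg (fun T => T v) h1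

theorem hhx {n : ℕ} {U : Set (Fin n → ℝ)} (hU : IsOpen U) {f : Pt n → ℝ}
    (hf : ContDiffOn ℝ (⊤ : ℕ∞) f (OmegaSet U)) {k : ℤ} (hk : PosHomog U k f) (i : Fin n) :
    PosHomog U k (pdx f i) := by
  intro L hL p hp
  have := hfd hU hf hk hL hp (Pi.single i 1, 0)
  simpa [pdx] using this

theorem hhy {n : ℕ} {U : Set (Fin n → ℝ)} (hU : IsOpen U) {f : Pt n → ℝ}
    (hf : ContDiffOn ℝ (⊤ : ℕ∞) f (OmegaSet U)) {k : ℤ} (hk : PosHomog U k f) (i : Fin n) :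
    PosHomog U (k - 1) (pdy f i) := by
  intro L hL p hp
  have := hfd hU hf hk hL hp (0, L⁻¹ • Pi.single i 1)
  simp only [smul_inv_smul₀ hL.ne'] at this
  have e : ((0, L⁻¹ • Pi.single i 1) : Pt n) = L⁻¹ • (0, Pi.single i 1) := by simp
  rw [show fderiv ℝ f p (0, L⁻¹ • Pi.single i 1) = L⁻¹ • fderiv ℝ f p (0, Pi.single i 1) by
    rw [e, map_smul]] at this
  simp only [pdy]
  rw [this, zpow_sub_one₀ hL.ne', smul_eq_mul]; ring

theorem hhEL {n : ℕ} {U : Set (Fin n → ℝ)} (hU : IsOpen U) {G : Fin n → Pt n → ℝ}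
    (hG : IsSpray U G) {f : Pt n → ℝ}
    (hf : ContDiffOn ℝ (⊤ : ℕ∞) f (OmegaSet U)) (hk : PosHomog U 2 f) (i : Fin n) :
    PosHomog U 2 (EL G f i) := by
  have hO := hOpen hU
  intro L hL p hp
  have hy := hhy hU hf hk i
  have hsy := hsmy hO hf i
  simp only [EL, Sop]
  rw [mul_sub, Finset.mul_sum, hhx hU hf hk i L hL p hp]
  congr 1
  refine Finset.sum_congr rfl fun k _ => ?_
  rw [hhx hU hsy hy k L hL p hp, hhy hU hsy hy k L hL p hp, (hG k).2 L hL p hp]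
  have e : ((2 : ℤ) - 1 - 1) = 0 := by norm_num
  have e' : ((2 : ℤ) - 1) = 1 := by norm_num
  rw [e, e', zpow_zero, zpow_one, Pi.smul_apply, smul_eq_mul, zpow_ofNat]; ring

theorem hEuler {n : ℕ} {U : Set (Fin n → ℝ)} (hU : IsOpen U) {f : Pt n → ℝ}
    (hf : ContDiffOn ℝ (⊤ : ℕ∞) f (OmegaSet U)) (hk : PosHomog U 2 f)
    {p : Pt n} (hp : p ∈ OmegaSet U) : ∑ j, p.2 j * pdy f j p = 2 * f p := by
  have hO := hOpen hU
  have e1 : ∑ j, p.2 j * pdy f j p = fderiv ℝ f p (0, p.2) := by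
    have : ((0, p.2) : Pt n) = ∑ j, p.2 j • ((0, Pi.single j 1) : Pt n) := by
      ext k
      · simp [Prod.fst_sum]
      · simp [Prod.snd_sum, Finset.sum_apply, Pi.single_apply]
    rw [this, map_sum]
    refine Finset.sum_congr rfl fun j _ => ?_
    rw [map_smul]; rfl
  have hc : HasDerivAt (fun t : ℝ => ((p.1, t • p.2) : Pt n)) (0, p.2) 1 := by
    refine (hasDerivAt_const _ _).prodMk ?_
    simpa using (hasDerivAt_id (1 : ℝ)).smul_const p.2
  have hd : HasFDerivAt f (fderiv ℝ f p) ((fun t : ℝ => ((p.1, t • p.2) : Pt n)) 1) := by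
    simpa using (hdiff hO hf hp).hasFDerivAt
  have h1 := hd.comp_hasDerivAt (1 : ℝ) hc
  have h2 : HasDerivAt (fun t : ℝ => t ^ 2 * f p) (2 * f p) 1 := by
    simpa using ((hasDerivAt_pow 2 (1 : ℝ)).mul_const (f p))
  have h3 : (f ∘ fun t : ℝ => ((p.1, t • p.2) : Pt n)) =ᶠ[nhds 1] (fun t : ℝ => t ^ 2 * f p) := by
    filter_upwards [lt_mem_nhds (zero_lt_one : (0 : ℝ) < 1)] with t ht
    simpa [zpow_ofNat] using hk t ht p hp
  rw [e1]
  exact h1.unique (h2.congr_of_eventuallyEq h3)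

/-- Theorem 1: a spray `S` is the geodesic spray of the Finsler structure `F`
iff the metric tensor is covariant constant: `∇g_{ij} = 0`. -/
theorem statement3 {n : ℕ} (hn : 1 ≤ n) (U : Set (Fin n → ℝ)) (hU : IsOpen U)
    (G : Fin n → Pt n → ℝ) (hG : IsSpray U G)
    (F : Pt n → ℝ) (hF : IsFinsler U F) :
    (∀ i, ∀ p ∈ OmegaSet U, EL G (fun q => F q ^ 2) i p = 0) ↔
      (∀ i j, ∀ p ∈ OmegaSet U, nablaT G (metricTensor F) i j p = 0) := by
  have hO := hOpen hU
  have hGs : ∀ i, ContDiffOn ℝ (⊤ : ℕ∞) (G i) (OmegaSet U) := fun i => (hG i).1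
  have hf : ContDiffOn ℝ (⊤ : ℕ∞) (fun q => F q ^ 2) (OmegaSet U) := hF.1.pow 2
  have hh : PosHomog U 2 (fun q => F q ^ 2) := by
    intro L hL p hp
    have := hF.2.2.1 L hL p hp
    simp only [this, zpow_one, zpow_ofNat]; ring
  have hs := fun i j p hp => hsym hO hGs hf i j (p := p) hp
  have hz : ∀ (a : Pt n → ℝ), (∀ p ∈ OmegaSet U, a p = 0) → ∀ p ∈ OmegaSet U, ∀ j,
      pdy a j p = 0 := by
    intro a ha p hp j
    have : fderiv ℝ a p = fderiv ℝ (fun _ => (0 : ℝ)) p :=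
      Filter.EventuallyEq.fderiv_eq (Filter.eventually_of_mem (hO.mem_nhds hp) ha)
    simp [pdy, this]
  constructor
  · intro h i j p hp
    have := hs i j p hp
    rw [hz _ (h i) p hp, hz _ (h j) p hp] at this
    linarith
  · intro h
    set E := fun i => EL G (fun q => F q ^ 2) i with hE
    have hEs : ∀ i, ContDiffOn ℝ (⊤ : ℕ∞) (E i) (OmegaSet U) := fun i =>
      (hsmS hO hGs (hsmy hO hf i)).sub (hsmx hO hf i)
    have hEh : ∀ i, PosHomog U 2 (E i) := fun i => hhEL hU hG hf hh i
    have ha : ∀ i j, ∀ p ∈ OmegaSet U, pdy (E j) i p = - pdy (E i) j p := by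
      intro i j p hp
      have := hs i j p hp
      rw [h i j p hp] at this
      change pdy (E i) j p + pdy (E j) i p = _ at this
      linarith
    have heu := fun i p hp => hEuler hU (hEs i) (hEh i) (p := p) hp
    have hA : ∀ p ∈ OmegaSet U, ∑ i, p.2 i * E i p = 0 := by
      intro p hp
      have e1 : 2 * ∑ i, p.2 i * E i p = ∑ i, ∑ j, p.2 i * (p.2 j * pdy (E i) j p) := by
        rw [Finset.mul_sum]
        refine Finset.sum_congr rfl fun i _ => ?_
        rw [← Finset.mul_sum, heu i p hp]; ring
      have e2 : ∑ i, ∑ j, p.2 i * (p.2 j * pdy (E i) j p)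
          = - ∑ i, ∑ j, p.2 i * (p.2 j * pdy (E i) j p) := by
        conv_lhs => rw [Finset.sum_comm]
        rw [← Finset.sum_neg_distrib]
        refine Finset.sum_congr rfl fun i _ => ?_
        rw [← Finset.sum_neg_distrib]
        refine Finset.sum_congr rfl fun j _ => ?_
        rw [ha i j p hp]; ring
      linarith
    intro i p hp
    have hc : ∀ k : Fin n, DifferentiableAt ℝ (fun q : Pt n => q.2 k) p :=
      fun k => (hcoordsm k).differentiable (by simp) p
    have hd := fun k => hdiff hO (hEs k) hp
    have hA' := hz _ hA p hp i
    rw [pdy, fderiv_fun_sum (fun k _ => (hc k).fun_mul (hd k)), ContinuousLinearMap.sum_apply] at hA'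
    have e3 : ∀ k, fderiv ℝ (fun q : Pt n => q.2 k * E k q) p (0, Pi.single i 1)
        = -(p.2 k * pdy (E i) k p) + (Pi.single i 1 : Fin n → ℝ) k * E k p := by
      intro k
      rw [hmul (hc k) (hd k), hcoord]
      have := ha i k p hp
      rw [pdy] at this
      rw [this]; ring
    simp only [e3] at hA'
    rw [Finset.sum_add_distrib, Finset.sum_neg_distrib, heu i p hp] at hA'
    have e4 : ∑ k, (Pi.single i 1 : Fin n → ℝ) k * E k p = E i p := by
      simp [Pi.single_apply]
    rw [e4] at hA'
    change E i p = 0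
    linarith
end
end

section
/- Assume n ≥ 2. Let G^i be a spray with coefficients N^i_j and let F̃ be a Finsler structure on U. Then the following are equivalent: (a) S is gyroscopic with respect to F̃, i.e. there exist smooth functions ω_{ij} : U → ℝ depending only on x, with ω_{ij} = −ω_{ji}, such that S(∂F̃/∂y^i) − ∂F̃/∂x^i = Σ_j ω_{ij}(x) y^j on Ω for all i; (b) the geodesic invariance condition ∇(∂²F̃/∂y^i∂y^j) = S(∂²F̃/∂y^i∂y^j) − Σ_k (N^k_i ∂²F̃/∂y^k∂y^j + N^k_j ∂²F̃/∂y^i∂y^k) = 0 holds on Ω for all i, j. -/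
noncomputable section

section helpers
variable {n : ℕ} {U : Set (Fin n → ℝ)}

lemma aux_open (hU : IsOpen U) : IsOpen (OmegaSet U) := by
  have : OmegaSet U = (Prod.fst ⁻¹' U) ∩ (Prod.snd ⁻¹' ({0}ᶜ : Set (Fin n → ℝ))) := by
    ext p; simp [OmegaSet]
  rw [this]
  exact (hU.preimage continuous_fst).inter (isOpen_compl_singleton.preimage continuous_snd)

lemma aux_diff (hU : IsOpen U) {f : Pt n → ℝ} (hf : ContDiffOn ℝ (⊤ : ℕ∞) f (OmegaSet U))
    {p : Pt n} (hp : p ∈ OmegaSet U) : DifferentiableAt ℝ f p :=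
  (hf.contDiffAt ((aux_open hU).mem_nhds hp)).differentiableAt (by simp)

lemma aux_smooth (hU : IsOpen U) {f : Pt n → ℝ} (hf : ContDiffOn ℝ (⊤ : ℕ∞) f (OmegaSet U))
    (u : Pt n) : ContDiffOn ℝ (⊤ : ℕ∞) (fun q => fderiv ℝ f q u) (OmegaSet U) :=
  (hf.fderiv_of_isOpen (aux_open hU) (m := (⊤ : ℕ∞)) (by simp)).clm_apply contDiffOn_const

lemma aux_pdx (hU : IsOpen U) {f : Pt n → ℝ} (hf : ContDiffOn ℝ (⊤ : ℕ∞) f (OmegaSet U))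
    (i : Fin n) : ContDiffOn ℝ (⊤ : ℕ∞) (pdx f i) (OmegaSet U) := aux_smooth hU hf _

lemma aux_pdy (hU : IsOpen U) {f : Pt n → ℝ} (hf : ContDiffOn ℝ (⊤ : ℕ∞) f (OmegaSet U))
    (i : Fin n) : ContDiffOn ℝ (⊤ : ℕ∞) (pdy f i) (OmegaSet U) := aux_smooth hU hf _

lemma aux_y (k : Fin n) : ContDiff ℝ (⊤ : ℕ∞) (fun p : Pt n => p.2 k) := by fun_prop

lemma aux_sop (hU : IsOpen U) {G : Fin n → Pt n → ℝ}
    (hG : ∀ i, ContDiffOn ℝ (⊤ : ℕ∞) (G i) (OmegaSet U))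
    {f : Pt n → ℝ} (hf : ContDiffOn ℝ (⊤ : ℕ∞) f (OmegaSet U)) :
    ContDiffOn ℝ (⊤ : ℕ∞) (Sop G f) (OmegaSet U) := by
  unfold Sop
  refine ContDiffOn.sum fun k _ => ?_
  exact ((aux_y k).contDiffOn.mul (aux_pdx hU hf k)).sub
    ((contDiffOn_const.mul (hG k)).mul (aux_pdy hU hf k))

lemma aux_EL (hU : IsOpen U) {G : Fin n → Pt n → ℝ}
    (hG : ∀ i, ContDiffOn ℝ (⊤ : ℕ∞) (G i) (OmegaSet U))
    {f : Pt n → ℝ} (hf : ContDiffOn ℝ (⊤ : ℕ∞) f (OmegaSet U)) (i : Fin n) :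
    ContDiffOn ℝ (⊤ : ℕ∞) (EL G f i) (OmegaSet U) :=
  (aux_sop hU hG (aux_pdy hU hf i)).sub (aux_pdx hU hf i)

lemma aux_symm (hU : IsOpen U) {f : Pt n → ℝ} (hf : ContDiffOn ℝ (⊤ : ℕ∞) f (OmegaSet U))
    {p : Pt n} (hp : p ∈ OmegaSet U) (u v : Pt n) :
    fderiv ℝ (fun q => fderiv ℝ f q u) p v = fderiv ℝ (fun q => fderiv ℝ f q v) p u := by
  have hd : DifferentiableAt ℝ (fderiv ℝ f) p :=
    ((hf.fderiv_of_isOpen (aux_open hU) (m := (⊤ : ℕ∞)) (by simp)).contDiffAt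
      ((aux_open hU).mem_nhds hp)).differentiableAt (by simp)
  have hs : IsSymmSndFDerivAt ℝ f p :=
    (hf.contDiffAt ((aux_open hU).mem_nhds hp)).isSymmSndFDerivAt (by
      simp only [minSmoothness_of_isRCLikeNormedField]; exact WithTop.coe_le_coe.2 (le_top : (2 : ℕ∞) ≤ ⊤))
  rw [fderiv_clm_apply hd (differentiableAt_const u), fderiv_clm_apply hd (differentiableAt_const v)]
  simpa using hs v u

lemma aux_congr (hU : IsOpen U) {f g : Pt n → ℝ} (h : ∀ p ∈ OmegaSet U, f p = g p)
    {p : Pt n} (hp : p ∈ OmegaSet U) : fderiv ℝ f p = fderiv ℝ g p :=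
  Filter.EventuallyEq.fderiv_eq (Filter.eventuallyEq_of_mem ((aux_open hU).mem_nhds hp) h)

lemma aux_sop_congr (hU : IsOpen U) (G : Fin n → Pt n → ℝ) {f g : Pt n → ℝ}
    (h : ∀ p ∈ OmegaSet U, f p = g p)
    {p : Pt n} (hp : p ∈ OmegaSet U) : Sop G f p = Sop G g p := by
  simp only [Sop, pdx, pdy, aux_congr hU h hp]

lemma aux_pdy_sop (hU : IsOpen U) {G : Fin n → Pt n → ℝ}
    (hG : ∀ i, ContDiffOn ℝ (⊤ : ℕ∞) (G i) (OmegaSet U))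
    {h : Pt n → ℝ} (hh : ContDiffOn ℝ (⊤ : ℕ∞) h (OmegaSet U)) (j : Fin n)
    {p : Pt n} (hp : p ∈ OmegaSet U) :
    pdy (Sop G h) j p = Sop G (pdy h j) p + pdx h j p - 2 * ∑ k, Ncoef G k j p * pdy h k p := by
  have hy : ∀ k : Fin n, HasFDerivAt (fun q : Pt n => q.2 k)
      ((ContinuousLinearMap.proj k).comp (ContinuousLinearMap.snd ℝ (Fin n → ℝ) (Fin n → ℝ))) p :=
    fun k => ContinuousLinearMap.hasFDerivAt
      ((ContinuousLinearMap.proj (R := ℝ) (φ := fun _ : Fin n => ℝ) k).comp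
        (ContinuousLinearMap.snd ℝ (Fin n → ℝ) (Fin n → ℝ)))
  have hder : HasFDerivAt (Sop G h) _ p := HasFDerivAt.fun_sum (u := Finset.univ) (fun k _ =>
    ((hy k).mul (aux_diff hU (aux_pdx hU hh k) hp).hasFDerivAt).sub
      (((aux_diff hU (hG k) hp).hasFDerivAt.const_mul 2).mul
        (aux_diff hU (aux_pdy hU hh k) hp).hasFDerivAt))
  have e1 : ∀ k, fderiv ℝ (pdx h k) p (0, Pi.single j 1) = pdx (pdy h j) k p :=
    fun k => aux_symm hU hh hp _ _
  have e2 : ∀ k, fderiv ℝ (pdy h k) p (0, Pi.single j 1) = pdy (pdy h j) k p :=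
    fun k => aux_symm hU hh hp _ _
  have e3 : ∀ k, fderiv ℝ (G k) p (0, Pi.single j 1) = Ncoef G k j p := fun k => rfl
  have e4 : pdx h j p = ∑ k, pdx h k p * (Pi.single j 1 : Fin n → ℝ) k := by
    simp [Pi.single_apply]
  rw [e4]
  have e5 : pdy (Sop G h) j p = fderiv ℝ (Sop G h) p (0, Pi.single j 1) := rfl
  rw [e5, hder.fderiv]
  simp only [ContinuousLinearMap.sum_apply, ContinuousLinearMap.sub_apply,
    ContinuousLinearMap.add_apply, ContinuousLinearMap.smul_apply, smul_eq_mul,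
    ContinuousLinearMap.comp_apply, ContinuousLinearMap.proj_apply, ContinuousLinearMap.coe_snd',
    e1, e2, e3, Sop]
  rw [Finset.mul_sum, ← Finset.sum_add_distrib, ← Finset.sum_sub_distrib]
  refine Finset.sum_congr rfl fun k _ => ?_
  ring

lemma aux_pdy_EL (hU : IsOpen U) {G : Fin n → Pt n → ℝ}
    (hG : ∀ i, ContDiffOn ℝ (⊤ : ℕ∞) (G i) (OmegaSet U))
    {f : Pt n → ℝ} (hf : ContDiffOn ℝ (⊤ : ℕ∞) f (OmegaSet U)) (i j : Fin n)
    {p : Pt n} (hp : p ∈ OmegaSet U) :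
    pdy (EL G f i) j p = Sop G (pdyy f j i) p + pdx (pdy f i) j p
      - 2 * (∑ k, Ncoef G k j p * pdyy f k i p) - pdx (pdy f j) i p := by
  have h1 := aux_pdy_sop hU hG (aux_pdy hU hf i) j hp
  have h2 : pdy (pdx f i) j p = pdx (pdy f j) i p := aux_symm hU hf hp _ _
  have h3 : pdy (EL G f i) j p = pdy (Sop G (pdy f i)) j p - pdy (pdx f i) j p := by
    unfold pdy
    rw [← ContinuousLinearMap.sub_apply]
    congr 1
    exact fderiv_sub (aux_diff hU (aux_sop hU hG (aux_pdy hU hf i)) hp)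
      (aux_diff hU (aux_pdx hU hf i) hp)
  rw [h3, h1, h2]
  rfl

lemma aux_key (hU : IsOpen U) {G : Fin n → Pt n → ℝ}
    (hG : ∀ i, ContDiffOn ℝ (⊤ : ℕ∞) (G i) (OmegaSet U))
    {f : Pt n → ℝ} (hf : ContDiffOn ℝ (⊤ : ℕ∞) f (OmegaSet U)) (i j : Fin n)
    {p : Pt n} (hp : p ∈ OmegaSet U) :
    pdy (EL G f i) j p + pdy (EL G f j) i p = 2 * nablaT G (pdyy f) i j p := by
  have hs : ∀ k l, ∀ q ∈ OmegaSet U, pdyy f k l q = pdyy f l k q :=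
    fun k l q hq => aux_symm hU hf hq _ _
  rw [aux_pdy_EL hU hG hf i j hp, aux_pdy_EL hU hG hf j i hp, nablaT,
    aux_sop_congr hU G (hs j i) hp, Finset.sum_add_distrib]
  have : ∀ k, pdyy f i k p = pdyy f k i p := fun k => hs i k p hp
  simp only [this]
  ring

lemma aux_hom_fderiv (hU : IsOpen U) {f : Pt n → ℝ}
    (hf : ContDiffOn ℝ (⊤ : ℕ∞) f (OmegaSet U)) {k : ℤ} (hk : PosHomog U k f)
    {L : ℝ} (hL : 0 < L) {p : Pt n} (hp : p ∈ OmegaSet U) (u v : Fin n → ℝ) :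
    fderiv ℝ f (p.1, L • p.2) (u, L • v) = L ^ k * fderiv ℝ f p (u, v) := by
  let A : Pt n →L[ℝ] Pt n := (ContinuousLinearMap.fst ℝ _ _).prod
    (L • ContinuousLinearMap.snd ℝ (Fin n → ℝ) (Fin n → ℝ))
  have hA : A p ∈ OmegaSet U := ⟨hp.1, smul_ne_zero hL.ne' hp.2⟩
  have h1 : fderiv ℝ (fun q => f (A q)) p = fderiv ℝ (fun q => L ^ k * f q) p :=
    aux_congr hU (fun q hq => hk L hL q hq) hp
  have h2 : HasFDerivAt (fun q => f (A q)) ((fderiv ℝ f (A p)).comp A) p :=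
    HasFDerivAt.comp p (aux_diff hU hf hA).hasFDerivAt A.hasFDerivAt
  rw [h2.fderiv, fderiv_const_mul (aux_diff hU hf hp)] at h1
  exact congrArg (fun T : Pt n →L[ℝ] ℝ => T (u, v)) h1

lemma aux_hom_pdx (hU : IsOpen U) {f : Pt n → ℝ}
    (hf : ContDiffOn ℝ (⊤ : ℕ∞) f (OmegaSet U)) {k : ℤ} (hk : PosHomog U k f) (i : Fin n) :
    PosHomog U k (pdx f i) := by
  intro L hL p hp
  simpa [pdx] using aux_hom_fderiv hU hf hk hL hp (Pi.single i 1) 0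

lemma aux_hom_pdy (hU : IsOpen U) {f : Pt n → ℝ}
    (hf : ContDiffOn ℝ (⊤ : ℕ∞) f (OmegaSet U)) {k : ℤ} (hk : PosHomog U k f) (i : Fin n) :
    PosHomog U (k - 1) (pdy f i) := by
  intro L hL p hp
  have h := aux_hom_fderiv hU hf hk hL hp 0 (Pi.single i 1)
  have e : ((0 : Fin n → ℝ), L • (Pi.single i 1 : Fin n → ℝ)) = L • (0, Pi.single i 1) := by
    simp
  rw [e, map_smul, smul_eq_mul] at h
  rw [zpow_sub_one₀ hL.ne']
  simp only [pdy]
  field_simp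
  linarith

lemma aux_hom_EL (hU : IsOpen U) {G : Fin n → Pt n → ℝ} (hG : IsSpray U G)
    {f : Pt n → ℝ} (hf : ContDiffOn ℝ (⊤ : ℕ∞) f (OmegaSet U)) (hk : PosHomog U 1 f)
    (i : Fin n) : PosHomog U 1 (EL G f i) := by
  have h0 := aux_hom_pdy hU hf hk i
  have hs := aux_pdy hU hf i
  intro L hL p hp
  have hx := fun k => aux_hom_pdx hU hs h0 k L hL p hp
  have hy := fun k => aux_hom_pdy hU hs h0 k L hL p hp
  have hg := fun k => (hG k).2 L hL p hp
  have hx' := aux_hom_pdx hU hf hk i L hL p hp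
  simp only [EL, Sop, hx, hy, hg, hx', mul_sub, Finset.mul_sum]
  congr 1
  refine Finset.sum_congr rfl fun k _ => ?_
  have : L ^ (2 : ℤ) = L * L := by rw [zpow_two]
  simp [this]
  field_simp

lemma aux_fd_y (f : Pt n → ℝ) (p : Pt n) (v : Fin n → ℝ) :
    fderiv ℝ f p (0, v) = ∑ j, pdy f j p * v j := by
  have hv : ((0 : Fin n → ℝ), v) = ∑ j, v j • ((0 : Fin n → ℝ), (Pi.single j 1 : Fin n → ℝ)) := by
    ext k
    · simp [Prod.fst_sum]
    · simp [Prod.snd_sum, Finset.sum_apply, Pi.single_apply]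
  rw [hv, map_sum]
  refine Finset.sum_congr rfl fun j _ => ?_
  rw [map_smul, smul_eq_mul, mul_comm]; rfl

lemma aux_euler (hU : IsOpen U) {f : Pt n → ℝ}
    (hf : ContDiffOn ℝ (⊤ : ℕ∞) f (OmegaSet U)) (hk : PosHomog U 1 f)
    {p : Pt n} (hp : p ∈ OmegaSet U) : f p = ∑ j, pdy f j p * p.2 j := by
  rw [← aux_fd_y]
  have hc : HasDerivAt (fun t : ℝ => ((p.1, t • p.2) : Pt n)) (0, (1 : ℝ) • p.2) 1 :=
    (hasDerivAt_const (1 : ℝ) p.1).prodMk ((hasDerivAt_id (1 : ℝ)).smul_const p.2)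
  have hfd : HasFDerivAt f (fderiv ℝ f p) ((p.1, (1 : ℝ) • p.2) : Pt n) := by
    simpa using (aux_diff hU hf hp).hasFDerivAt
  have h1 := hfd.comp_hasDerivAt (1 : ℝ) hc
  have h2 : HasDerivAt (fun t : ℝ => t * f p) (1 * f p) 1 :=
    (hasDerivAt_id (1 : ℝ)).mul_const (f p)
  have h3 : (f ∘ fun t : ℝ => ((p.1, t • p.2) : Pt n)) =ᶠ[nhds 1] fun t : ℝ => t * f p := by
    filter_upwards [lt_mem_nhds (show (0 : ℝ) < 1 by norm_num)] with t ht
    simpa using hk t ht p hp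
  have := (h2.congr_of_eventuallyEq h3).unique h1
  simpa using this

lemma aux_const (hn : 2 ≤ n) (hU : IsOpen U) {f : Pt n → ℝ}
    (hf : ContDiffOn ℝ (⊤ : ℕ∞) f (OmegaSet U))
    (h0 : ∀ k, ∀ p ∈ OmegaSet U, pdy f k p = 0) {x : Fin n → ℝ} (hx : x ∈ U)
    {y z : Fin n → ℝ} (hy : y ≠ 0) (hz : z ≠ 0) : f (x, y) = f (x, z) := by
  have hc : IsPreconnected ({0}ᶜ : Set (Fin n → ℝ)) := by
    apply (isConnected_compl_singleton_of_one_lt_rank _ 0).isPreconnected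
    rw [rank_fin_fun]
    exact_mod_cast hn
  have hd : ∀ w : Fin n → ℝ, w ≠ 0 → HasFDerivAt (fun w => f (x, w)) (0 : (Fin n → ℝ) →L[ℝ] ℝ) w := by
    intro w hw
    have hp : ((x, w) : Pt n) ∈ OmegaSet U := ⟨hx, hw⟩
    have h := (aux_diff hU hf hp).hasFDerivAt.comp w (hasFDerivAt_prodMk_right x w)
    have hz : (fderiv ℝ f (x, w)).comp (ContinuousLinearMap.inr ℝ (Fin n → ℝ) (Fin n → ℝ)) = 0 := by
      refine ContinuousLinearMap.ext fun v => ?_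
      have := aux_fd_y f (x, w) v
      simp only [h0 _ _ hp, zero_mul, Finset.sum_const_zero] at this
      exact this
    rw [hz] at h
    exact h
  exact isOpen_compl_singleton.is_const_of_fderiv_eq_zero hc
    (fun w hw => (hd w hw).differentiableAt.differentiableWithinAt)
    (fun w hw => (hd w hw).fderiv) hy hz

end helpers

/-- Theorem 3: a spray `S` is gyroscopic with respect to the Finsler structure
`F̃`, i.e. `δ_S F̃ = i_S ω` for some basic (skew-symmetric, `x`-dependent) 2-form `ω`,
iff the geodesic invariance `∇(∂²F̃/∂y^i∂y^j) = 0` holds on `Ω`. -/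
theorem statement9 {n : ℕ} (hn : 2 ≤ n) (U : Set (Fin n → ℝ)) (hU : IsOpen U)
    (G : Fin n → Pt n → ℝ) (hG : IsSpray U G)
    (Ft : Pt n → ℝ) (hFt : IsFinsler U Ft) :
    (∃ ω : Fin n → Fin n → (Fin n → ℝ) → ℝ,
        (∀ i j, ContDiffOn ℝ (⊤ : ℕ∞) (ω i j) U) ∧
        (∀ i j x, ω i j x = -ω j i x) ∧
        (∀ i, ∀ p ∈ OmegaSet U, EL G Ft i p = ∑ j, ω i j p.1 * p.2 j)) ↔
      (∀ i j, ∀ p ∈ OmegaSet U, nablaT G (pdyy Ft) i j p = 0) := by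
  have hGs := fun i => (hG i).1
  obtain ⟨hF, -, hF1, -⟩ := hFt
  constructor
  · rintro ⟨ω, hω, hsk, hE⟩ i j p hp
    have key : ∀ i j, pdy (EL G Ft i) j p = ω i j p.1 := by
      intro i j
      have hEs := aux_diff hU (aux_EL hU hGs hF i) hp
      have hc : HasDerivAt (fun t : ℝ => ((p.1, p.2 + t • Pi.single j 1) : Pt n))
          (0, (1 : ℝ) • Pi.single j 1) 0 :=
        (hasDerivAt_const (0 : ℝ) p.1).prodMk
          (((hasDerivAt_id (0 : ℝ)).smul_const (Pi.single j 1)).const_add p.2)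
      have hfd : HasFDerivAt (EL G Ft i) (fderiv ℝ (EL G Ft i) p)
          ((p.1, p.2 + (0 : ℝ) • Pi.single j 1) : Pt n) := by
        simpa using hEs.hasFDerivAt
      have h1 := hfd.comp_hasDerivAt (0 : ℝ) hc
      have h2 : HasDerivAt (fun t : ℝ => (∑ k, ω i k p.1 * p.2 k) + t * ω i j p.1)
          (1 * ω i j p.1) 0 :=
        ((hasDerivAt_id (0 : ℝ)).mul_const (ω i j p.1)).const_add _
      have h3 : ((EL G Ft i) ∘ fun t : ℝ => ((p.1, p.2 + t • Pi.single j 1) : Pt n))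
          =ᶠ[nhds 0] fun t : ℝ => (∑ k, ω i k p.1 * p.2 k) + t * ω i j p.1 := by
        have hm : ∀ᶠ t in nhds (0 : ℝ), ((p.1, p.2 + t • Pi.single j 1) : Pt n) ∈ OmegaSet U := by
          apply hc.continuousAt.eventually_mem
          apply (aux_open hU).mem_nhds
          simpa using hp
        filter_upwards [hm] with t ht
        simp only [Function.comp]
        rw [hE i _ ht]
        simp [mul_add, Finset.sum_add_distrib, Pi.single_apply, mul_comm]
      have := (h2.congr_of_eventuallyEq h3).unique h1
      simpa [pdy] using this.symm
    have h := aux_key hU hGs hF i j hp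
    rw [key, key, hsk i j] at h
    linarith
  · intro hb
    have hE := aux_EL hU hGs hF
    have sk : ∀ i j, ∀ p ∈ OmegaSet U, pdy (EL G Ft i) j p = - pdy (EL G Ft j) i p := by
      intro i j p hp
      have h := aux_key hU hGs hF i j hp
      rw [hb i j p hp] at h
      linarith
    have sk2 : ∀ i j k, ∀ p ∈ OmegaSet U,
        pdy (pdy (EL G Ft i) j) k p = - pdy (pdy (EL G Ft j) i) k p := by
      intro i j k p hp
      have h := aux_congr hU (g := fun q => - pdy (EL G Ft j) i q) (sk i j) hp
      have h' := congrArg (fun T : Pt n →L[ℝ] ℝ => T (0, Pi.single k 1)) h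
      rw [fderiv_fun_neg] at h'
      exact h'
    have sy : ∀ i j k, ∀ p ∈ OmegaSet U,
        pdy (pdy (EL G Ft i) j) k p = pdy (pdy (EL G Ft i) k) j p :=
      fun i j k p hp => aux_symm hU (hE i) hp _ _
    have z : ∀ i j k, ∀ p ∈ OmegaSet U, pdy (pdy (EL G Ft i) j) k p = 0 := by
      intro i j k p hp
      have a1 := sy i j k p hp
      have a2 := sk2 i k j p hp
      have a3 := sy k i j p hp
      have a4 := sk2 k j i p hp
      have a5 := sy j k i p hp
      have a6 := sk2 j i k p hp
      linarith
    let e : Fin n → ℝ := fun _ => 1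
    have he : e ≠ 0 := fun h => one_ne_zero (congrFun h (⟨0, by omega⟩ : Fin n))
    have hsm : ∀ i j, ContDiffOn ℝ (⊤ : ℕ∞) (fun x => pdy (EL G Ft i) j (x, e)) U := by
      intro i j
      exact (aux_pdy hU (hE i) j).comp (f := fun x => ((x, e) : Pt n))
        (contDiff_id.prodMk contDiff_const).contDiffOn
        (fun x hx => ⟨hx, he⟩)
    refine ⟨fun i j x => (pdy (EL G Ft i) j (x, e) - pdy (EL G Ft j) i (x, e)) / 2, ?_, ?_, ?_⟩
    · intro i j
      exact ((hsm i j).sub (hsm j i)).div_const 2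
    · intro i j x
      ring
    · intro i p hp
      rw [aux_euler hU (hE i) (aux_hom_EL hU hG hF hF1 i) hp]
      refine Finset.sum_congr rfl fun j _ => ?_
      have c := aux_const hn hU (aux_pdy hU (hE i) j) (fun k p hp => z i j k p hp) hp.1 hp.2 he
      have s := sk i j (p.1, e) ⟨hp.1, he⟩
      have c' : pdy (EL G Ft i) j p = pdy (EL G Ft i) j (p.1, e) := c
      show _ = (pdy (EL G Ft i) j (p.1, e) - pdy (EL G Ft j) i (p.1, e)) / 2 * p.2 j
      rw [c', show pdy (EL G Ft j) i (p.1, e) = - pdy (EL G Ft i) j (p.1, e) by linarith]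
      ring
end
end
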